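/- Let P and Q be irreducible aperiodic stochastic matrices on finite state sets. If the mixing Markov shifts determined by P and Q are finitarily isomorphic with finite expected code times, then Γ_P = Γ_Q, Δ_P = Δ_Q, and for every n ≥ 1 the ratio of any strictly positive weight of a cycle of length n in P to any strictly positive weight of a cycle of length n in Q belongs to Δ_P (equality of the distinguished generators c_PΔ_P = c_QΔ_Q of the cyclic quotients Γ/Δ). -/

import Mathlib

open MeasureTheory ENNReal Filter

noncomputable section

/-- The left shift transformation on bi-infinite sequences: `(shift x) n = x (n+1)`. -/
def shift {A : Type*} : (ℤ → A) → (ℤ → A) := fun x n => x (n + 1)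

/-- `φ` is a homomorphism (factor map) from the shift system `(ℤ → A, μ, shift)` to
`(ℤ → B, ν, shift)`, defined on the shift-invariant full-measure domain `D`. -/
structure IsFactorMap {A B : Type*} [MeasurableSpace A] [MeasurableSpace B]
    (μ : Measure (ℤ → A)) (ν : Measure (ℤ → B))
    (D : Set (ℤ → A)) (φ : (ℤ → A) → (ℤ → B)) : Prop where
  measurable_map : Measurable φ
  dom_measurable : MeasurableSet D
  dom_shift_invariant : shift ⁻¹' D = D
  dom_full : μ D = 1
  pushforward : ν = μ.map φ
  equivariant : ∀ x ∈ D, φ (shift x) = shift (φ x)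

/-- The window `[-q, r]` of `x` determines the zero coordinate of the image under `φ`
(among points of the domain `D`). -/
def DeterminesAt {A B : Type*} (D : Set (ℤ → A)) (φ : (ℤ → A) → (ℤ → B))
    (q r : ℕ) (x : ℤ → A) : Prop :=
  ∀ y ∈ D, (∀ i : ℤ, -(q : ℤ) ≤ i → i ≤ (r : ℤ) → y i = x i) → φ y 0 = φ x 0

/-- A homomorphism `φ` with domain `D` is finitary if for almost every `x` in the domain
there are nonnegative integers `q`, `r` such that the coordinates `x_{-q}, …, x_r`
determine `(φ x)_0`. -/
def IsFinitary {A B : Type*} [MeasurableSpace A] [MeasurableSpace B]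
    (μ : Measure (ℤ → A)) (D : Set (ℤ → A)) (φ : (ℤ → A) → (ℤ → B)) : Prop :=
  ∀ᵐ x ∂μ, x ∈ D → ∃ q r : ℕ, DeterminesAt D φ q r x

/-- The code length `C(x) = q(x) + r(x)` with `q(x), r(x)` minimal such that the window
`[-q(x), r(x)]` determines the zero output coordinate (`⊤` if no finite window works). -/
def codeLength {A B : Type*} (D : Set (ℤ → A)) (φ : (ℤ → A) → (ℤ → B))
    (x : ℤ → A) : ℝ≥0∞ :=
  ⨅ (q : ℕ) (r : ℕ) (_ : DeterminesAt D φ q r x), ((q : ℝ≥0∞) + (r : ℝ≥0∞))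

/-- `μ` is the Bernoulli (product) measure on `(ℤ → A)` given by the probability vector `p`. -/
def IsBernoulliMeasure {A : Type*} [MeasurableSpace A] (μ : Measure (ℤ → A)) (p : A → ℝ) : Prop :=
  ∀ (F : Finset ℤ) (s : ℤ → A),
    μ {x | ∀ i ∈ F, x i = s i} = ENNReal.ofReal (∏ i ∈ F, p (s i))

/-- A strictly positive probability vector on a finite alphabet. -/
def IsProbVector {A : Type*} [Fintype A] (p : A → ℝ) : Prop :=
  (∀ i, 0 < p i) ∧ ∑ i, p i = 1

/-- The entropy `H(p) = -∑ p_i log p_i` of a probability vector. -/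
def vecEntropy {A : Type*} [Fintype A] (p : A → ℝ) : ℝ := -∑ i, p i * Real.log (p i)

/-- A finitary isomorphism: a pair of mutually inverse finitary factor maps. -/
def IsFinitaryIsomorphism {A B : Type*} [MeasurableSpace A] [MeasurableSpace B]
    (μ : Measure (ℤ → A)) (ν : Measure (ℤ → B))
    (D : Set (ℤ → A)) (E : Set (ℤ → B))
    (φ : (ℤ → A) → (ℤ → B)) (ψ : (ℤ → B) → (ℤ → A)) : Prop :=
  IsFactorMap μ ν D φ ∧ IsFactorMap ν μ E ψ ∧
  IsFinitary μ D φ ∧ IsFinitary ν E ψ ∧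
  (∀ x ∈ D, φ x ∈ E ∧ ψ (φ x) = x) ∧ (∀ y ∈ E, ψ y ∈ D ∧ φ (ψ y) = y)

/-- A stochastic matrix: nonnegative entries, rows summing to one. -/
def IsStochastic {S : Type*} [Fintype S] (P : Matrix S S ℝ) : Prop :=
  (∀ i j, 0 ≤ P i j) ∧ ∀ i, ∑ j, P i j = 1

/-- Irreducible and aperiodic (primitive): some power has all entries strictly positive. -/
def IsPrimitive {S : Type*} [Fintype S] [DecidableEq S] (P : Matrix S S ℝ) : Prop :=
  ∃ n : ℕ, ∀ i j, 0 < (P ^ n) i j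

/-- Irreducible: every state leads to every state in some positive number of steps. -/
def IsIrreducibleMat {S : Type*} [Fintype S] [DecidableEq S] (P : Matrix S S ℝ) : Prop :=
  ∀ i j, ∃ n : ℕ, 0 < n ∧ 0 < (P ^ n) i j

/-- A stationary probability vector for `P`. -/
def IsStationaryVector {S : Type*} [Fintype S] (P : Matrix S S ℝ) (ppi : S → ℝ) : Prop :=
  (∀ i, 0 ≤ ppi i) ∧ (∑ i, ppi i = 1) ∧ ∀ j, ∑ i, ppi i * P i j = ppi j

/-- `μ` is the (stationary) Markov measure on `(ℤ → S)` determined by the stochastic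
matrix `P` with stationary vector `ppi`. -/
def IsMarkovMeasure {S : Type*} [Fintype S] [MeasurableSpace S]
    (μ : Measure (ℤ → S)) (P : Matrix S S ℝ) (ppi : S → ℝ) : Prop :=
  ∀ (m n : ℤ), m ≤ n → ∀ w : ℤ → S,
    μ {x | ∀ i : ℤ, m ≤ i → i ≤ n → x i = w i} =
      ENNReal.ofReal (ppi (w m) * ∏ i ∈ Finset.Ico m n, P (w i) (w (i + 1)))

/-- The entropy `h(P) = -∑_{i,j} π_i P(i,j) log P(i,j)` of the Markov shift of `P`. -/
def markovEntropy {S : Type*} [Fintype S] (P : Matrix S S ℝ) (ppi : S → ℝ) : ℝ :=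
  -∑ i, ∑ j, ppi i * P i j * Real.log (P i j)

/-- The weight `P(c_0,c_1) ⋯ P(c_{n-1},c_n)` of the path `c_0, …, c_n` in `P`. -/
def cycleWeight {S : Type*} (P : Matrix S S ℝ) (n : ℕ) (c : ℕ → S) : ℝ :=
  ∏ i ∈ Finset.range n, P (c i) (c (i + 1))

/-- `c` describes a cycle of length `n`: it returns to its starting state. -/
def IsCycle {S : Type*} (n : ℕ) (c : ℕ → S) : Prop := c n = c 0

/-- Krieger's Δ-group: the multiplicative subgroup of the positive reals (inside `ℝˣ`)
generated by ratios of strictly positive weights of two cycles of the same length through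
the same state. -/
def DeltaGroup {S : Type*} (P : Matrix S S ℝ) : Subgroup ℝˣ :=
  Subgroup.closure {u : ℝˣ | ∃ (n : ℕ) (c d : ℕ → S), 0 < n ∧ IsCycle n c ∧ IsCycle n d ∧
    c 0 = d 0 ∧ 0 < cycleWeight P n c ∧ 0 < cycleWeight P n d ∧
    (u : ℝ) = cycleWeight P n c / cycleWeight P n d}

/-- The Γ-group of Parry–Schmidt: the multiplicative subgroup of the positive reals (inside
`ℝˣ`) generated by all strictly positive cycle weights. -/
def GammaGroup {S : Type*} (P : Matrix S S ℝ) : Subgroup ℝˣ :=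
  Subgroup.closure {u : ℝˣ | ∃ (n : ℕ) (c : ℕ → S), 0 < n ∧ IsCycle n c ∧
    0 < cycleWeight P n c ∧ (u : ℝ) = cycleWeight P n c}

/-- The matrix `P^{(t)}` with entries `P(i,j)^t` where `P(i,j) > 0`, and `0` elsewhere,
viewed as a complex matrix. -/
def betaMatrix {S : Type*} (P : Matrix S S ℝ) (t : ℝ) : Matrix S S ℂ :=
  Matrix.of fun i j => if 0 < P i j then ((P i j ^ t : ℝ) : ℂ) else 0

/-- Tuncel's β-function: `β_P(t)` is the spectral radius of `P^{(t)}`. -/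
def betaFunction {S : Type*} [Fintype S] [DecidableEq S] (P : Matrix S S ℝ) (t : ℝ) : ℝ≥0∞ :=
  spectralRadius ℂ (betaMatrix P t)

/-- Two shift systems are finitarily isomorphic with finite expected code times (fect):
there is a finitary isomorphism such that the code lengths of the map and of its inverse
both have finite expectation. -/
def FinitarilyIsomorphicFect {A B : Type*} [MeasurableSpace A] [MeasurableSpace B]
    (μ : Measure (ℤ → A)) (ν : Measure (ℤ → B)) : Prop :=
  ∃ (D : Set (ℤ → A)) (E : Set (ℤ → B)) (φ : (ℤ → A) → (ℤ → B)) (ψ : (ℤ → B) → (ℤ → A)),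
    IsFinitaryIsomorphism μ ν D E φ ψ ∧
    (∫⁻ x, codeLength D φ x ∂μ) < ⊤ ∧ (∫⁻ y, codeLength E ψ y ∂ν) < ⊤

/-!
Call two finite paths parallel if they have the same end points. Replacing a path by a parallel one
inside a bi-infinite sequence, and translating the right tail to make room, multiplies a Markov
measure by the ratio of the two weights. A code with finite expected code length almost surely
determines the coordinate at distance `n` from a window of radius `n`, for all large `n`, by the
Borel–Cantelli lemma. Such a code therefore sends sequences that differ by the replacement of a
path to sequences that differ by the replacement of a path, and the difference of the lengths of
the two paths is unchanged. If the code is also injective, then it preserves the measure of images,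
so the ratio of the two weights is unchanged as well. The pairs (difference of lengths, ratio of
weights) of parallel paths are therefore an invariant. They form the group generated by the pairs
(length, weight) of cycles, from which `Γ`, `Δ` and the distinguished generator can be read off.
-/

section Words

variable {A : Type*}

/-- The cylinder of the sequences that agree with `w` on the integer interval `[m, n]`. Only the
restriction of `w` to this interval matters. -/
def wordCylinder (m n : ℤ) (w : ℤ → A) : Set (ℤ → A) :=
  {x | Set.EqOn x w (Set.Icc m n)}

theorem wordCylinder_eq_preimage_restrict (m n : ℤ) (w : ℤ → A) :
    wordCylinder m n w =
      (Finset.Icc m n).restrict (π := fun _ => A) ⁻¹' {(Finset.Icc m n).restrict w} := by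
  ext x
  simp [wordCylinder, Set.EqOn, funext_iff]

theorem wordCylinder_subset_wordCylinder {m n m' n' : ℤ} {w w' : ℤ → A}
    (h : Set.Icc m' n' ⊆ Set.Icc m n) (hw : w ∈ wordCylinder m' n' w') :
    wordCylinder m n w ⊆ wordCylinder m' n' w' :=
  fun _ hx => (Set.EqOn.mono h hx).trans hw

theorem disjoint_wordCylinder {m n m' n' : ℤ} {w w' : ℤ → A}
    (h : Set.Icc m' n' ⊆ Set.Icc m n) (hw : w ∉ wordCylinder m' n' w') :
    Disjoint (wordCylinder m n w) (wordCylinder m' n' w') :=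
  Set.disjoint_left.mpr fun _ hx hx' => hw ((Set.EqOn.mono h hx).symm.trans hx')

theorem measurableSet_wordCylinder [MeasurableSpace A] [MeasurableSingletonClass A]
    (m n : ℤ) (w : ℤ → A) : MeasurableSet (wordCylinder m n w) := by
  rw [wordCylinder_eq_preimage_restrict]
  exact Finset.measurable_restrict _ (measurableSet_singleton _)

/-- Finite measures on the sequence space are compared on centred cylinders, and only on long
ones: the windows `[-K, K]` with `K ≥ K₀` are cofinal among the finite sets of coordinates. -/
theorem measure_ext_of_wordCylinder [Countable A] [MeasurableSpace A] [MeasurableSingletonClass A]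
    {μ ν : Measure (ℤ → A)} [IsFiniteMeasure μ] (K₀ : ℕ)
    (h : ∀ K : ℕ, K₀ ≤ K → ∀ w, μ (wordCylinder (-K) K w) = ν (wordCylinder (-K) K w)) :
    μ = ν := by
  have marginal_window : ∀ K : ℕ, K₀ ≤ K → ν.map (Finset.Icc (-K : ℤ) K).restrict =
      μ.map (Finset.Icc (-K : ℤ) K).restrict := by
    refine fun K hK => Measure.ext_of_singleton fun f => ?_
    rw [Measure.map_apply (Finset.measurable_restrict _) (measurableSet_singleton _),
      Measure.map_apply (Finset.measurable_restrict _) (measurableSet_singleton _)]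
    obtain hempty | ⟨w, rfl⟩ :=
      ((Finset.Icc (-K : ℤ) K).restrict (π := fun _ => A) ⁻¹' {f}).eq_empty_or_nonempty
    · simp only [hempty, measure_empty]
    · rw [← wordCylinder_eq_preimage_restrict, h K hK]
  refine IsProjectiveLimit.unique (P := fun I : Finset ℤ => μ.map I.restrict) (fun _ => rfl)
    fun I => ?_
  obtain ⟨K, hK₀, hIK⟩ : ∃ K : ℕ, K₀ ≤ K ∧ I ⊆ Finset.Icc (-K : ℤ) K := by
    refine ⟨K₀ + I.sup Int.natAbs, by lia, fun i hi => ?_⟩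
    have := Finset.le_sup (f := Int.natAbs) hi
    rw [Finset.mem_Icc]
    lia
  have restrict_window (ρ : Measure (ℤ → A)) : ρ.map I.restrict =
      (ρ.map (Finset.Icc (-K : ℤ) K).restrict).map (Finset.restrict₂ (π := fun _ => A) hIK) := by
    rw [Measure.map_map (Finset.measurable_restrict₂ hIK) (Finset.measurable_restrict _),
      Finset.restrict₂_comp_restrict]
  exact (restrict_window ν).trans <|
    (congrArg _ (marginal_window K hK₀)).trans (restrict_window μ).symm

/-- The weight of the word `w m, …, w n`, viewed as a path of length `n - m`. -/
def pathWeight (P : Matrix A A ℝ) (m n : ℤ) (w : ℤ → A) : ℝ :=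
  ∏ i ∈ Finset.Ico m n, P (w i) (w (i + 1))

theorem pathWeight_nonneg {P : Matrix A A ℝ} (hP : ∀ i j, 0 ≤ P i j) (m n : ℤ) (w : ℤ → A) :
    0 ≤ pathWeight P m n w :=
  Finset.prod_nonneg fun _ _ => hP _ _

theorem pathWeight_mul_pathWeight (P : Matrix A A ℝ) {m k n : ℤ} (hmk : m ≤ k) (hkn : k ≤ n)
    (w : ℤ → A) : pathWeight P m k w * pathWeight P k n w = pathWeight P m n w := by
  rw [pathWeight, pathWeight, pathWeight, ← Finset.Ico_union_Ico_eq_Ico hmk hkn,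
    Finset.prod_union (Finset.Ico_disjoint_Ico_consecutive m k n)]

theorem pathWeight_add_right (P : Matrix A A ℝ) (m n k : ℤ) (w : ℤ → A) :
    pathWeight P (m + k) (n + k) w = pathWeight P m n fun i => w (i + k) := by
  rw [pathWeight, ← Finset.map_add_right_Ico, Finset.prod_map]
  simp only [addRightEmbedding_apply, pathWeight, add_right_comm]

theorem pathWeight_congr (P : Matrix A A ℝ) {m n : ℤ} {w w' : ℤ → A}
    (h : Set.EqOn w w' (Set.Icc m n)) : pathWeight P m n w = pathWeight P m n w' := by
  refine Finset.prod_congr rfl fun i hi => ?_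
  rw [Finset.mem_Ico] at hi
  rw [h ⟨hi.1, hi.2.le⟩, h ⟨by lia, by lia⟩]

theorem pathWeight_eq_cycleWeight (P : Matrix A A ℝ) (m : ℤ) (n : ℕ) (w : ℤ → A) :
    pathWeight P m (m + n) w = cycleWeight P n fun i => w (m + i) := by
  induction n with
  | zero => simp [pathWeight, cycleWeight]
  | succ n ih =>
    rw [← pathWeight_mul_pathWeight P (k := m + n) (by lia) (by lia), ih, cycleWeight, cycleWeight,
      Finset.prod_range_succ, pathWeight, Nat.cast_add_one, ← add_assoc,
      Finset.Ico_add_one_right_eq_Icc, Finset.Icc_self, Finset.prod_singleton]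

end Words

section Replacement

variable {A : Type*} {lo hi hi' : ℤ} {u v x y : ℤ → A}

/-- The word of `u` on `[lo, hi]` and the word of `v` on `[lo, hi']` have the same first and the
same last symbol, so that one can replace the other inside a path. -/
structure ParallelWords (lo hi hi' : ℤ) (u v : ℤ → A) : Prop where
  le : lo ≤ hi
  le' : lo ≤ hi'
  left : u lo = v lo
  right : u hi = v hi'

theorem ParallelWords.symm (h : ParallelWords lo hi hi' u v) : ParallelWords lo hi' hi v u :=
  ⟨h.le', h.le, h.left.symm, h.right.symm⟩

/-- `x` and `y` agree up to `lo`, and the tail of `x` from `hi` on is the tail of `y` from `hi'`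
on: `x` and `y` differ by the replacement of a finite word. -/
structure TailsAgree (lo hi hi' : ℤ) (x y : ℤ → A) : Prop where
  left : ∀ i ≤ lo, y i = x i
  right : ∀ j, 0 ≤ j → y (hi' + j) = x (hi + j)

/-- Replace the word of `x` on `(lo, hi]` by the word of `v` on `(lo, hi']`, translating the part
of `x` to the right of `hi` accordingly. -/
def replaceWord (lo hi hi' : ℤ) (v x : ℤ → A) : ℤ → A := fun i =>
  if i ≤ lo then x i else if i ≤ hi' then v i else x (i + (hi - hi'))

theorem measurable_replaceWord [MeasurableSpace A] (lo hi hi' : ℤ) (v : ℤ → A) :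
    Measurable (replaceWord lo hi hi' v) := by
  refine measurable_pi_lambda _ fun i => ?_
  unfold replaceWord
  split_ifs
  · exact measurable_pi_apply i
  · exact measurable_const
  · exact measurable_pi_apply _

theorem ParallelWords.mapsTo_replaceWord (h : ParallelWords lo hi hi' u v) :
    Set.MapsTo (replaceWord lo hi hi' v) (wordCylinder lo hi u) (wordCylinder lo hi' v) := by
  intro x hx i ⟨hlo, hi'⟩
  obtain rfl | hlo := hlo.eq_or_lt
  · rw [replaceWord, if_pos le_rfl, hx ⟨le_rfl, h.le⟩, h.left]
  · rw [replaceWord, if_neg hlo.not_ge, if_pos hi']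

theorem ParallelWords.leftInvOn_replaceWord (h : ParallelWords lo hi hi' u v) :
    Set.LeftInvOn (replaceWord lo hi' hi u) (replaceWord lo hi hi' v) (wordCylinder lo hi u) := by
  intro x hx
  have := h.le'
  ext i
  unfold replaceWord
  split_ifs with h₁ h₂ h₃ h₄
  · rfl
  · exact (hx ⟨by lia, h₂⟩).symm
  · lia
  · lia
  · congr 1; ring

theorem ParallelWords.image_replaceWord (h : ParallelWords lo hi hi' u v) {Z : Set (ℤ → A)}
    (hZ : Z ⊆ wordCylinder lo hi u) :
    replaceWord lo hi hi' v '' Z = replaceWord lo hi' hi u ⁻¹' Z ∩ wordCylinder lo hi' v := by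
  ext y
  constructor
  · rintro ⟨x, hx, rfl⟩
    exact ⟨by rwa [Set.mem_preimage, h.leftInvOn_replaceWord (hZ hx)],
      h.mapsTo_replaceWord (hZ hx)⟩
  · exact fun hy => ⟨_, hy.1, h.symm.leftInvOn_replaceWord hy.2⟩

theorem ParallelWords.measurableSet_image_replaceWord [MeasurableSpace A]
    [MeasurableSingletonClass A] (h : ParallelWords lo hi hi' u v) {Z : Set (ℤ → A)}
    (hZ : MeasurableSet Z) (hZu : Z ⊆ wordCylinder lo hi u) :
    MeasurableSet (replaceWord lo hi hi' v '' Z) := by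
  rw [h.image_replaceWord hZu]
  exact (measurable_replaceWord lo hi' hi u hZ).inter (measurableSet_wordCylinder lo hi' v)

theorem ParallelWords.tailsAgree_replaceWord (h : ParallelWords lo hi hi' u v)
    (hx : x ∈ wordCylinder lo hi u) : TailsAgree lo hi hi' x (replaceWord lo hi hi' v x) where
  left i hilo := if_pos hilo
  right j hj := by
    obtain rfl | hj := hj.eq_or_lt
    · rw [add_zero, add_zero, h.mapsTo_replaceWord hx ⟨h.le', le_rfl⟩,
        hx ⟨h.le, le_rfl⟩, h.right]
    · have := h.le'
      rw [replaceWord, if_neg (by lia), if_neg (by lia)]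
      congr 1; ring

theorem TailsAgree.parallelWords (h : TailsAgree lo hi hi' x y) (hle : lo ≤ hi) (hle' : lo ≤ hi') :
    ParallelWords lo hi hi' x y :=
  ⟨hle, hle', (h.left lo le_rfl).symm, by simpa using (h.right 0 le_rfl).symm⟩

theorem TailsAgree.eq_replaceWord (h : TailsAgree lo hi hi' x y)
    (hy : y ∈ wordCylinder lo hi' v) : y = replaceWord lo hi hi' v x := by
  ext i
  unfold replaceWord
  split_ifs with h₁ h₂
  · exact h.left i h₁
  · exact hy ⟨by lia, h₂⟩
  · rw [show i + (hi - hi') = hi + (i - hi') by ring, ← h.right (i - hi') (by lia),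
      add_sub_cancel]

theorem measurableSet_tailsAgree {Ω : Type*} [MeasurableSpace Ω] [Countable A] [MeasurableSpace A]
    [MeasurableSingletonClass A] {f g : Ω → ℤ → A} (hf : Measurable f) (hg : Measurable g)
    (lo hi hi' : ℤ) : MeasurableSet {ω | TailsAgree lo hi hi' (f ω) (g ω)} := by
  have coord_eq : ∀ i j : ℤ, MeasurableSet {ω | g ω i = f ω j} := fun i j =>
    measurableSet_eq_fun ((measurable_pi_apply i).comp hg) ((measurable_pi_apply j).comp hf)
  have : {ω | TailsAgree lo hi hi' (f ω) (g ω)} =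
      (⋂ (i : ℤ) (_ : i ≤ lo), {ω | g ω i = f ω i}) ∩
        ⋂ (j : ℤ) (_ : 0 ≤ j), {ω | g ω (hi' + j) = f ω (hi + j)} := by
    ext ω
    simp only [Set.mem_inter_iff, Set.mem_iInter, Set.mem_ofPred_eq]
    exact ⟨fun h => ⟨h.left, h.right⟩, fun h => ⟨h.1, h.2⟩⟩
  rw [this]
  exact (MeasurableSet.iInter fun i => MeasurableSet.iInter fun _ => coord_eq i i).inter
    (MeasurableSet.iInter fun j => MeasurableSet.iInter fun _ => coord_eq _ _)

theorem TailsAgree.pathWeight_mul_eq (P : Matrix A A ℝ) (h : TailsAgree lo hi hi' x y)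
    (hle : lo ≤ hi) (hle' : lo ≤ hi') {m n : ℤ} (hm : m ≤ lo) (hn : hi ≤ n) :
    pathWeight P m n x * pathWeight P lo hi' y =
      pathWeight P m (n + (hi' - hi)) y * pathWeight P lo hi x := by
  have left : pathWeight P m lo y = pathWeight P m lo x :=
    pathWeight_congr P fun i hi => h.left i hi.2
  have right : pathWeight P hi' (n + (hi' - hi)) y = pathWeight P hi n x := by
    have translate := pathWeight_add_right P hi n (hi' - hi) y
    rw [add_sub_cancel] at translate
    refine translate.trans (pathWeight_congr P fun i hi => ?_)
    have := h.right (i - _) (sub_nonneg.mpr hi.1)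
    rwa [add_sub_cancel, ← add_sub_assoc, add_sub_right_comm, add_comm, ← add_sub_assoc,
      add_sub_assoc] at this
  have split_x : pathWeight P m n x =
      pathWeight P m lo x * (pathWeight P lo hi x * pathWeight P hi n x) := by
    rw [pathWeight_mul_pathWeight P hle hn,
      pathWeight_mul_pathWeight P hm (hle.trans hn)]
  have split_y : pathWeight P m (n + (hi' - hi)) y =
      pathWeight P m lo y * (pathWeight P lo hi' y * pathWeight P hi' (n + (hi' - hi)) y) := by
    rw [pathWeight_mul_pathWeight P hle' (by lia),
      pathWeight_mul_pathWeight P hm (by lia)]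
  rw [split_x, split_y, left, right]
  ring

theorem mapsTo_replaceWord_wordCylinder {m n : ℤ} (hm : m ≤ hi) (hn : lo ≤ n) (v z : ℤ → A) :
    Set.MapsTo (replaceWord lo hi hi' v) (wordCylinder m n z)
      (wordCylinder m (n + (hi' - hi)) (replaceWord lo hi hi' v z)) := by
  intro y hy i ⟨hmi, hin⟩
  unfold replaceWord
  split_ifs with h₁ h₂
  · exact hy ⟨hmi, by lia⟩
  · rfl
  · exact hy ⟨by lia, by lia⟩

theorem ParallelWords.preimage_replaceWord_inter_wordCylinder (h : ParallelWords lo hi hi' u v)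
    {m n : ℤ} (hm : m ≤ lo) (hn : hi' ≤ n) {z : ℤ → A} (hz : z ∈ wordCylinder lo hi' v) :
    replaceWord lo hi hi' v ⁻¹' wordCylinder m n z ∩ wordCylinder lo hi u =
      wordCylinder m (n + (hi - hi')) (replaceWord lo hi' hi u z) := by
  have hle := h.le
  have hle' := h.le'
  ext x
  constructor
  · rintro ⟨hTx, hx⟩
    rw [← h.leftInvOn_replaceWord hx]
    exact mapsTo_replaceWord_wordCylinder (by lia) (by lia) u z hTx
  · intro hx
    refine ⟨?_, wordCylinder_subset_wordCylinder (Set.Icc_subset_Icc hm (by lia))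
      (h.symm.mapsTo_replaceWord hz) hx⟩
    have := mapsTo_replaceWord_wordCylinder (hi' := hi') (hm.trans hle)
      (show lo ≤ n + (hi - hi') by lia) v _ hx
    rwa [h.symm.leftInvOn_replaceWord hz, add_assoc, sub_add_sub_cancel, sub_self, add_zero] at this

end Replacement

section MarkovMeasure

/-- The power `shift ^ k` of the shift, for an integer exponent `k`. -/
def shiftBy {A : Type*} (k : ℤ) (x : ℤ → A) : ℤ → A := fun i => x (i + k)

variable {S : Type*} [Fintype S] [MeasurableSpace S] {μ : Measure (ℤ → S)} {P : Matrix S S ℝ}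
  {p : S → ℝ}

theorem IsMarkovMeasure.measure_wordCylinder (hμ : IsMarkovMeasure μ P p) {m n : ℤ} (hmn : m ≤ n)
    (w : ℤ → S) :
    μ (wordCylinder m n w) = ENNReal.ofReal (p (w m) * pathWeight P m n w) := by
  rw [pathWeight, ← hμ m n hmn w]
  congr 1 with x
  simp [wordCylinder, Set.EqOn]

theorem IsMarkovMeasure.pathWeight_pos (hμ : IsMarkovMeasure μ P p) (hP : ∀ i j, 0 ≤ P i j)
    {m n : ℤ} (hmn : m ≤ n) {w : ℤ → S} (hw : μ (wordCylinder m n w) ≠ 0) :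
    0 < pathWeight P m n w := by
  refine (pathWeight_nonneg hP m n w).lt_of_ne fun h => hw ?_
  rw [hμ.measure_wordCylinder hmn, ← h, mul_zero, ENNReal.ofReal_zero]

variable [MeasurableSingletonClass S]

theorem IsMarkovMeasure.isProbabilityMeasure (hμ : IsMarkovMeasure μ P p)
    (hp : IsStationaryVector P p) : IsProbabilityMeasure μ := by
  have marginal (s : S) : μ ((fun x => x 0) ⁻¹' {s}) = ENNReal.ofReal (p s) := by
    rw [show (fun x : ℤ → S => x 0) ⁻¹' {s} = wordCylinder 0 0 fun _ => s by
      ext x; simp [wordCylinder, Set.EqOn], hμ.measure_wordCylinder le_rfl]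
    simp [pathWeight]
  have total := sum_measure_preimage_singleton (μ := μ) (f := fun x : ℤ → S => x 0) Finset.univ
    fun s _ => measurable_pi_apply 0 (measurableSet_singleton s)
  simp only [marginal, Finset.coe_univ, Set.preimage_univ] at total
  exact ⟨by rw [← total, ← ENNReal.ofReal_sum_of_nonneg fun i _ => hp.1 i, hp.2.1,
    ENNReal.ofReal_one]⟩

theorem IsMarkovMeasure.measurePreserving_shiftBy [IsFiniteMeasure μ] (hμ : IsMarkovMeasure μ P p)
    (k : ℤ) : MeasurePreserving (shiftBy k) μ μ := by
  have measurable : Measurable (shiftBy (A := S) k) :=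
    measurable_pi_lambda _ fun i => measurable_pi_apply (i + k)
  refine ⟨measurable, measure_ext_of_wordCylinder 0 fun K _ w => ?_⟩
  have preimage : shiftBy k ⁻¹' wordCylinder (-K) K w =
      wordCylinder (-K + k) (K + k) (shiftBy (-k) w) := by
    ext x
    refine ⟨fun hx i hi => ?_, fun hx i hi => ?_⟩
    · simpa [shiftBy] using hx (x := i + -k) ⟨by linarith [hi.1], by linarith [hi.2]⟩
    · simpa [shiftBy] using hx (x := i + k) ⟨by linarith [hi.1], by linarith [hi.2]⟩
  rw [Measure.map_apply measurable (measurableSet_wordCylinder _ _ _), preimage,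
    hμ.measure_wordCylinder (by lia), hμ.measure_wordCylinder (by lia), pathWeight_add_right]
  simp [shiftBy]

variable {lo hi hi' : ℤ} {u v : ℤ → S}

theorem IsMarkovMeasure.smul_map_replaceWord [IsFiniteMeasure μ] (hμ : IsMarkovMeasure μ P p)
    (hP : ∀ i j, 0 ≤ P i j) (h : ParallelWords lo hi hi' u v) :
    ENNReal.ofReal (pathWeight P lo hi' v) •
        (μ.restrict (wordCylinder lo hi u)).map (replaceWord lo hi hi' v) =
      ENNReal.ofReal (pathWeight P lo hi u) • μ.restrict (wordCylinder lo hi' v) := by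
  have := ((μ.restrict (wordCylinder lo hi u)).map (replaceWord lo hi hi' v)).smul_finite
    (ENNReal.ofReal_ne_top (r := pathWeight P lo hi' v))
  refine measure_ext_of_wordCylinder (lo.natAbs + hi'.natAbs) fun K hK z => ?_
  have hT := measurable_replaceWord lo hi hi' v
  have hle := h.le
  have hcyl := measurableSet_wordCylinder (-K) K z
  simp only [Measure.smul_apply, smul_eq_mul, Measure.map_apply hT hcyl,
    Measure.restrict_apply (hT hcyl), Measure.restrict_apply hcyl]
  by_cases hz : z ∈ wordCylinder lo hi' v
  · have hz' := h.symm.mapsTo_replaceWord hz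
    have tails := h.symm.tailsAgree_replaceWord hz
    have cocycle := tails.pathWeight_mul_eq P h.le' hle (m := -K) (n := K)
      (by lia) (by lia)
    rw [pathWeight_congr P hz, pathWeight_congr P hz'] at cocycle
    rw [h.preimage_replaceWord_inter_wordCylinder (by lia) (by lia) hz,
      Set.inter_eq_left.mpr
        (wordCylinder_subset_wordCylinder (Set.Icc_subset_Icc (by lia) (by lia)) hz),
      hμ.measure_wordCylinder (by lia), hμ.measure_wordCylinder (by lia),
      tails.left _ (by lia), ← ENNReal.ofReal_mul (pathWeight_nonneg hP _ _ _),
      ← ENNReal.ofReal_mul (pathWeight_nonneg hP _ _ _)]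
    congr 1
    linear_combination -p (z (-K)) * cocycle
  · have disjoint := disjoint_wordCylinder
      (Set.Icc_subset_Icc (show -(K : ℤ) ≤ lo by lia) (show hi' ≤ (K : ℤ) by lia)) hz
    have disjoint' : Disjoint (replaceWord lo hi hi' v ⁻¹' wordCylinder (-K) K z)
        (wordCylinder lo hi u) :=
      (disjoint.preimage _).mono_right h.mapsTo_replaceWord
    rw [disjoint.inter_eq, disjoint'.inter_eq, measure_empty, mul_zero, mul_zero]

theorem IsMarkovMeasure.pathWeight_mul_measureReal_image [IsFiniteMeasure μ]
    (hμ : IsMarkovMeasure μ P p) (hP : ∀ i j, 0 ≤ P i j) (h : ParallelWords lo hi hi' u v)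
    {Z : Set (ℤ → S)} (hZ : MeasurableSet Z) (hZu : Z ⊆ wordCylinder lo hi u) :
    pathWeight P lo hi u * μ.real (replaceWord lo hi hi' v '' Z) =
      pathWeight P lo hi' v * μ.real Z := by
  have hT := measurable_replaceWord lo hi hi' v
  have hTZ := h.measurableSet_image_replaceWord hZ hZu
  have scaling := congrArg (·.real (replaceWord lo hi hi' v '' Z)) (hμ.smul_map_replaceWord hP h)
  simp only [measureReal_ennreal_smul_apply, map_measureReal_apply hT hTZ,
    measureReal_restrict_apply (hT hTZ), measureReal_restrict_apply hTZ,
    ENNReal.toReal_ofReal (pathWeight_nonneg hP _ _ _)] at scaling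
  rw [h.leftInvOn_replaceWord.injOn.preimage_image_inter hZu,
    Set.inter_eq_left.mpr ((Set.image_mono hZu).trans h.mapsTo_replaceWord.image_subset)] at scaling
  exact scaling.symm

end MarkovMeasure

section CodeLength

variable {A B : Type*} {D : Set (ℤ → A)} {φ : (ℤ → A) → (ℤ → B)}

theorem determinesAt_of_codeLength_le {x : ℤ → A} {n : ℕ} (h : codeLength D φ x ≤ n) :
    DeterminesAt D φ n n x := by
  have : codeLength D φ x < (n + 1 : ℕ) := h.trans_lt (by exact_mod_cast n.lt_succ_self)
  simp only [codeLength, iInf_lt_iff] at this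
  obtain ⟨q, r, hqr, hlt⟩ := this
  have hlt : q + r < n + 1 := by exact_mod_cast hlt
  exact fun y hy hyx => hqr y hy fun i hqi hir => hyx i (by lia) (by lia)

/-- The first Borel–Cantelli lemma, applied to `f ∘ T n > n`, whose probabilities sum to at most
`1 + ∫ f`. -/
theorem ae_eventually_comp_le {Ω : Type*} [MeasurableSpace Ω] {μ : Measure Ω}
    [IsProbabilityMeasure μ] {f : Ω → ℝ≥0∞} (hf : Measurable f) (hint : ∫⁻ x, f x ∂μ < ⊤)
    {T : ℕ → Ω → Ω} (hT : ∀ n, MeasurePreserving (T n) μ μ) :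
    ∀ᵐ x ∂μ, ∀ᶠ n : ℕ in atTop, f (T n x) ≤ n := by
  let _ : MeasureSpace Ω := ⟨μ⟩
  have : IsProbabilityMeasure (volume : Measure Ω) := ‹IsProbabilityMeasure μ›
  have tail (n : ℕ) : μ (T n ⁻¹' {x | (n : ℝ≥0∞) < f x}) =
      volume {x | (f x).toReal ∈ Set.Ioi (n : ℝ)} := by
    rw [(hT n).measure_preimage (measurableSet_lt measurable_const hf).nullMeasurableSet]
    refine measure_congr (eventuallyEq_set.mpr ?_)
    filter_upwards [ae_lt_top hf hint.ne] with x hx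
    rw [Set.mem_Ioi, ← ENNReal.toReal_natCast n,
      ENNReal.toReal_lt_toReal (ENNReal.natCast_ne_top n) hx.ne]
  have summable : ∑' n : ℕ, μ (T n ⁻¹' {x | (n : ℝ≥0∞) < f x}) ≠ ⊤ := by
    simp_rw [tail]
    exact (ProbabilityTheory.tsum_prob_mem_Ioi_lt_top
      (integrable_toReal_of_lintegral_ne_top hf.aemeasurable hint.ne)
      fun _ => ENNReal.toReal_nonneg).ne
  filter_upwards [ae_eventually_notMem summable] with x hx
  filter_upwards [hx] with n hn
  exact not_lt.mp hn

variable [Countable A] [MeasurableSpace A] [MeasurableSingletonClass A]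
  [Countable B] [MeasurableSpace B] [MeasurableSingletonClass B]

theorem measurableSet_determinesAt (D : Set (ℤ → A)) (hφ : Measurable φ) (q r : ℕ) :
    MeasurableSet {x | DeterminesAt D φ q r x} := by
  let window := Finset.Icc (-q : ℤ) r
  let g : (ℤ → A) → (window → A) × B := fun x => (window.restrict x, φ x 0)
  have hg : Measurable g :=
    (Finset.measurable_restrict window).prodMk ((measurable_pi_apply 0).comp hφ)
  have : {x | DeterminesAt D φ q r x} =
      g ⁻¹' {p | ∀ y ∈ D, window.restrict y = p.1 → φ y 0 = p.2} := by
    ext x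
    simp [DeterminesAt, g, window, funext_iff]
  rw [this]
  exact hg (Set.to_countable _).measurableSet

theorem measurable_codeLength (D : Set (ℤ → A)) (hφ : Measurable φ) :
    Measurable (codeLength D φ) := by
  classical
  refine Measurable.iInf fun q => Measurable.iInf fun r => ?_
  simp only [iInf_eq_if]
  exact Measurable.ite (measurableSet_determinesAt D hφ q r) measurable_const measurable_const

end CodeLength

section FactorMap

theorem shift_shiftBy {A : Type*} (k : ℤ) (x : ℤ → A) :
    shift (shiftBy k x) = shiftBy (k + 1) x := by
  ext i
  simp only [shiftBy, shift, add_assoc, add_comm 1 k]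

theorem shiftBy_zero {A : Type*} (x : ℤ → A) : shiftBy 0 x = x := by
  ext i
  simp only [shiftBy, add_zero]

theorem shift_injective {A : Type*} : Function.Injective (shift (A := A)) := by
  intro x y hxy
  ext i
  simpa [shift] using congrFun hxy (i - 1)

variable {A B : Type*} [MeasurableSpace A] [MeasurableSpace B] {μ : Measure (ℤ → A)}
  {ν : Measure (ℤ → B)} {D : Set (ℤ → A)} {φ : (ℤ → A) → (ℤ → B)}

theorem IsFactorMap.ae_mem [IsProbabilityMeasure μ] (hφ : IsFactorMap μ ν D φ) :
    ∀ᵐ x ∂μ, x ∈ D :=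
  (mem_ae_iff_prob_eq_one hφ.dom_measurable).mpr hφ.dom_full

theorem IsFactorMap.shiftBy_mem_iff (hφ : IsFactorMap μ ν D φ) (k : ℤ) (x : ℤ → A) :
    shiftBy k x ∈ D ↔ x ∈ D := by
  have succ (k : ℤ) : shiftBy (k + 1) x ∈ D ↔ shiftBy k x ∈ D := by
    rw [← shift_shiftBy, ← Set.mem_preimage, hφ.dom_shift_invariant]
  induction k with
  | zero => rw [shiftBy_zero]
  | succ k ih => exact (succ _).trans ih
  | pred k ih => rwa [← succ, sub_add_cancel]

theorem IsFactorMap.map_shiftBy (hφ : IsFactorMap μ ν D φ) (k : ℤ) {x : ℤ → A} (hx : x ∈ D) :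
    φ (shiftBy k x) = shiftBy k (φ x) := by
  have succ (k : ℤ) : φ (shiftBy (k + 1) x) = shift (φ (shiftBy k x)) := by
    rw [← shift_shiftBy, hφ.equivariant _ ((hφ.shiftBy_mem_iff k x).mpr hx)]
  induction k with
  | zero => rw [shiftBy_zero, shiftBy_zero]
  | succ k ih => rw [succ, ih, shift_shiftBy]
  | pred k ih => exact shift_injective (by rw [← succ, shift_shiftBy, sub_add_cancel, ih])

theorem IsFactorMap.eq_of_determinesAt (hφ : IsFactorMap μ ν D φ) {x y : ℤ → A} (hx : x ∈ D)
    (hy : y ∈ D) {j k : ℤ} {q r : ℕ} (hdet : DeterminesAt D φ q r (shiftBy j x))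
    (hyx : ∀ i : ℤ, -(q : ℤ) ≤ i → i ≤ r → y (i + k) = x (i + j)) : φ y k = φ x j := by
  have := hdet (shiftBy k y) ((hφ.shiftBy_mem_iff k y).mpr hy) hyx
  rw [hφ.map_shiftBy k hy, hφ.map_shiftBy j hx] at this
  simpa only [shiftBy, zero_add] using this

/-- Since the coordinate at distance `n` outside the replaced word is determined by a window of
radius `n` for all large `n`, it does not see the replacement. -/
theorem IsFactorMap.ae_exists_tailsAgree [Countable A] [MeasurableSingletonClass A] [Countable B]
    [MeasurableSingletonClass B] [IsProbabilityMeasure μ] (hφ : IsFactorMap μ ν D φ)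
    (hμ : ∀ k, MeasurePreserving (shiftBy k) μ μ) (hlen : ∫⁻ x, codeLength D φ x ∂μ < ⊤)
    (lo hi hi' : ℤ) :
    ∀ᵐ x ∂μ, ∀ y ∈ D, TailsAgree lo hi hi' x y →
      ∃ N : ℕ, TailsAgree (lo - N) (hi + N) (hi' + N) (φ x) (φ y) := by
  have short := fun k : ℕ → ℤ => ae_eventually_comp_le
    (measurable_codeLength D hφ.measurable_map) hlen fun n => hμ (k n)
  filter_upwards [hφ.ae_mem, short (lo - ·), short (hi + ·)] with x hx hleft hright y hy hxy
  obtain ⟨N, hN⟩ := eventually_atTop.mp (hleft.and hright)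
  refine ⟨N, fun i hi => ?_, fun j hj => ?_⟩
  · obtain ⟨n, rfl⟩ : ∃ n : ℕ, i = lo - n := ⟨(lo - i).toNat, by lia⟩
    refine hφ.eq_of_determinesAt hx hy (determinesAt_of_codeLength_le (hN n (by lia)).1) ?_
    exact fun i _ hin => hxy.left _ (by lia)
  · obtain ⟨n, hn⟩ : ∃ n : ℕ, (N : ℤ) + j = n := ⟨(N + j).toNat, by lia⟩
    rw [add_assoc, add_assoc, hn]
    refine hφ.eq_of_determinesAt hx hy (determinesAt_of_codeLength_le (hN n (by lia)).2) ?_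
    intro i hni _
    rw [add_left_comm, add_left_comm i hi]
    exact hxy.right _ (by lia)

variable [StandardBorelSpace A] [StandardBorelSpace B] {Z : Set (ℤ → A)}

theorem IsFactorMap.measurableSet_image (hφ : IsFactorMap μ ν D φ) (hinj : Set.InjOn φ D)
    (hZ : MeasurableSet Z) (hZD : Z ⊆ D) : MeasurableSet (φ '' Z) :=
  hZ.image_of_measurable_injOn hφ.measurable_map (hinj.mono hZD)

theorem IsFactorMap.measure_image [IsProbabilityMeasure μ] (hφ : IsFactorMap μ ν D φ)
    (hinj : Set.InjOn φ D) (hZ : MeasurableSet Z) (hZD : Z ⊆ D) : ν (φ '' Z) = μ Z := by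
  rw [hφ.pushforward,
    Measure.map_apply hφ.measurable_map (hφ.measurableSet_image hinj hZ hZD)]
  refine measure_congr (eventuallyEq_set.mpr ?_)
  filter_upwards [hφ.ae_mem] with x hx
  exact hinj.mem_image_iff hZD hx

end FactorMap

section Transport

theorem exists_mem_measure_inter_fiber_ne_zero {Ω ι : Type*} [MeasurableSpace Ω] [Countable ι]
    {μ : Measure Ω} {Z : Set Ω} (hZ : μ Z ≠ 0) (g : Ω → ι) :
    ∃ x₀ ∈ Z, μ (Z ∩ g ⁻¹' {g x₀}) ≠ 0 := by
  have cover : Z ⊆ ⋃ i, Z ∩ g ⁻¹' {i} := fun x hx => Set.mem_iUnion.mpr ⟨g x, hx, rfl⟩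
  obtain ⟨i, hi⟩ := exists_measure_pos_of_not_measure_iUnion_null (mt (measure_mono_null cover) hZ)
  obtain ⟨x₀, hx₀, rfl⟩ := nonempty_of_measure_ne_zero hi.ne'
  exact ⟨x₀, hx₀, hi.ne'⟩

variable {S : Type*} [Fintype S] [MeasurableSpace S] [MeasurableSingletonClass S]
  {P : Matrix S S ℝ} {p : S → ℝ} {μ : Measure (ℤ → S)} [IsProbabilityMeasure μ]
  {lo hi hi' : ℤ} {u v : ℤ → S}

theorem IsMarkovMeasure.ae_replaceWord_mem (hμ : IsMarkovMeasure μ P p) (hP : ∀ i j, 0 ≤ P i j)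
    (h : ParallelWords lo hi hi' u v) (hv : 0 < pathWeight P lo hi' v) {D : Set (ℤ → S)}
    (hD : ∀ᵐ x ∂μ, x ∈ D) :
    ∀ᵐ x ∂μ, x ∈ wordCylinder lo hi u → replaceWord lo hi hi' v x ∈ D := by
  have hT := measurable_replaceWord lo hi hi' v
  have quasi : (μ.restrict (wordCylinder lo hi u)).map (replaceWord lo hi hi' v) ≪ μ := by
    have scaled := hμ.smul_map_replaceWord hP h
    refine (Measure.AbsolutelyContinuous.rfl.smul_right (ENNReal.ofReal_pos.mpr hv).ne').trans ?_
    rw [scaled]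
    exact Measure.restrict_le_self.absolutelyContinuous.smul_left _
  rw [← ae_restrict_iff' (measurableSet_wordCylinder lo hi u)]
  exact ae_of_ae_map hT.aemeasurable (quasi.ae_le hD)

variable {B : Type*} [MeasurableSpace B] {ν : Measure (ℤ → B)} {D : Set (ℤ → S)}
  {φ : (ℤ → S) → (ℤ → B)}

section

variable [Countable B] [MeasurableSingletonClass B]

theorem IsFactorMap.exists_measure_tailsAgree_ne_zero (hφ : IsFactorMap μ ν D φ)
    (hμ : IsMarkovMeasure μ P p) (hP : ∀ i j, 0 ≤ P i j)
    (hlen : ∫⁻ x, codeLength D φ x ∂μ < ⊤) (h : ParallelWords lo hi hi' u v)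
    (hu : μ (wordCylinder lo hi u) ≠ 0) (hv : 0 < pathWeight P lo hi' v) :
    ∃ N : ℕ, μ {x ∈ wordCylinder lo hi u ∩ (D ∩ replaceWord lo hi hi' v ⁻¹' D) |
      TailsAgree (lo - N) (hi + N) (hi' + N) (φ x) (φ (replaceWord lo hi hi' v x))} ≠ 0 := by
  have cover : (wordCylinder lo hi u : Set (ℤ → S)) ≤ᵐ[μ]
      ⋃ N : ℕ, {x ∈ wordCylinder lo hi u ∩ (D ∩ replaceWord lo hi hi' v ⁻¹' D) |
        TailsAgree (lo - N) (hi + N) (hi' + N) (φ x) (φ (replaceWord lo hi hi' v x))} := by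
    filter_upwards [hφ.ae_mem, hμ.ae_replaceWord_mem hP h hv hφ.ae_mem,
      hφ.ae_exists_tailsAgree hμ.measurePreserving_shiftBy hlen lo hi hi'] with x hx hTx htails hxu
    obtain ⟨N, hN⟩ := htails _ (hTx hxu) (h.tailsAgree_replaceWord hxu)
    exact Set.mem_iUnion.mpr ⟨N, ⟨hxu, hx, hTx hxu⟩, hN⟩
  obtain ⟨N, hN⟩ := exists_measure_pos_of_not_measure_iUnion_null
    fun hnull => hu (nonpos_iff_eq_zero.mp ((measure_mono_ae cover).trans_eq hnull))
  exact ⟨N, hN.ne'⟩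

/-- There are countably many possible pairs of image words, so one pair occurs on a set of positive
measure. -/
theorem IsFactorMap.exists_map_replaceWord (hφ : IsFactorMap μ ν D φ)
    (hμ : IsMarkovMeasure μ P p) (hP : ∀ i j, 0 ≤ P i j)
    (hlen : ∫⁻ x, codeLength D φ x ∂μ < ⊤) (h : ParallelWords lo hi hi' u v)
    (hu : μ (wordCylinder lo hi u) ≠ 0) (hv : 0 < pathWeight P lo hi' v) :
    ∃ (N : ℕ) (a b : ℤ → B) (Z : Set (ℤ → S)),
      ParallelWords (lo - N) (hi + N) (hi' + N) a b ∧ MeasurableSet Z ∧ μ Z ≠ 0 ∧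
      Z ⊆ wordCylinder lo hi u ∩ (D ∩ replaceWord lo hi hi' v ⁻¹' D) ∧
      Set.MapsTo φ Z (wordCylinder (lo - N) (hi + N) a) ∧
      ∀ x ∈ Z, φ (replaceWord lo hi hi' v x) =
        replaceWord (lo - N) (hi + N) (hi' + N) b (φ x) := by
  let T := replaceWord lo hi hi' v
  have hφT : Measurable fun x => φ (T x) :=
    hφ.measurable_map.comp (measurable_replaceWord lo hi hi' v)
  obtain ⟨N, hN⟩ := hφ.exists_measure_tailsAgree_ne_zero hμ hP hlen h hu hv
  let words (x : ℤ → S) :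
      (Finset.Icc (lo - N) (hi + N) → B) × (Finset.Icc (lo - N) (hi' + N) → B) :=
    ((Finset.Icc (lo - N) (hi + N)).restrict (φ x),
      (Finset.Icc (lo - N) (hi' + N)).restrict (φ (T x)))
  have hwords : Measurable words := ((Finset.measurable_restrict _).comp hφ.measurable_map).prodMk
    ((Finset.measurable_restrict _).comp hφT)
  obtain ⟨x₀, hx₀, hZ⟩ := exists_mem_measure_inter_fiber_ne_zero hN words
  have fiber (x : ℤ → S) (hx : words x = words x₀) :
      φ x ∈ wordCylinder (lo - N) (hi + N) (φ x₀) ∧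
        φ (T x) ∈ wordCylinder (lo - N) (hi' + N) (φ (T x₀)) := by
    rw [wordCylinder_eq_preimage_restrict, wordCylinder_eq_preimage_restrict]
    exact Prod.ext_iff.mp hx
  have hle := h.le
  have hle' := h.le'
  refine ⟨N, φ x₀, φ (T x₀), _, hx₀.2.parallelWords (by lia) (by lia), ?_, hZ,
    fun x hx => hx.1.1, fun x hx => (fiber x hx.2).1,
    fun x hx => hx.1.2.eq_replaceWord (fiber x hx.2).2⟩
  exact (((measurableSet_wordCylinder lo hi u).inter (hφ.dom_measurable.inter
    (measurable_replaceWord lo hi hi' v hφ.dom_measurable))).inter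
    (measurableSet_tailsAgree hφ.measurable_map hφT _ _ _)).inter
    (hwords (measurableSet_singleton _))

end

variable [Fintype B] [MeasurableSingletonClass B] {Q : Matrix B B ℝ} {q : B → ℝ}
  {k l l' : ℤ} {a b : ℤ → B} {Z : Set (ℤ → S)}

/-- Both maps `replaceWord lo hi hi' v` and `replaceWord k l l' b` scale measures by the inverse
of the ratio of weights, and `φ` intertwines them on `Z` and preserves measure. -/
theorem IsFactorMap.pathWeight_ratio_eq [StandardBorelSpace S] [StandardBorelSpace B]
    [IsFiniteMeasure ν] (hφ : IsFactorMap μ ν D φ) (hinj : Set.InjOn φ D)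
    (hμ : IsMarkovMeasure μ P p) (hP : ∀ i j, 0 ≤ P i j)
    (hν : IsMarkovMeasure ν Q q) (hQ : ∀ i j, 0 ≤ Q i j) (h : ParallelWords lo hi hi' u v)
    (h' : ParallelWords k l l' a b) (hv : 0 < pathWeight P lo hi' v) (hZ : MeasurableSet Z)
    (hZ₀ : μ Z ≠ 0) (hZu : Z ⊆ wordCylinder lo hi u ∩ (D ∩ replaceWord lo hi hi' v ⁻¹' D))
    (hZa : Set.MapsTo φ Z (wordCylinder k l a))
    (hZb : ∀ x ∈ Z, φ (replaceWord lo hi hi' v x) = replaceWord k l l' b (φ x)) :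
    0 < pathWeight Q k l a ∧ 0 < pathWeight Q k l' b ∧
      pathWeight P lo hi u / pathWeight P lo hi' v =
        pathWeight Q k l a / pathWeight Q k l' b := by
  let TZ := replaceWord lo hi hi' v '' Z
  have hTZ : MeasurableSet TZ := h.measurableSet_image_replaceWord hZ fun x hx => (hZu hx).1
  have image_image : φ '' TZ = replaceWord k l l' b '' (φ '' Z) := by
    rw [Set.image_image, Set.image_image]
    exact Set.image_congr hZb
  have measure_φZ : ν (φ '' Z) = μ Z := hφ.measure_image hinj hZ fun x hx => (hZu hx).2.1
  have measure_φTZ : ν (replaceWord k l l' b '' (φ '' Z)) = μ TZ := by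
    rw [← image_image]
    exact hφ.measure_image hinj hTZ (Set.image_subset_iff.mpr fun x hx => (hZu hx).2.2)
  have scaling : pathWeight P lo hi u * μ.real TZ = pathWeight P lo hi' v * μ.real Z :=
    hμ.pathWeight_mul_measureReal_image hP h hZ fun x hx => (hZu hx).1
  have scaling' : pathWeight Q k l a * μ.real TZ = pathWeight Q k l' b * μ.real Z := by
    simpa only [measureReal_def, measure_φZ, measure_φTZ] using
      hν.pathWeight_mul_measureReal_image hQ h'
        (hφ.measurableSet_image hinj hZ fun x hx => (hZu hx).2.1) hZa.image_subset
  have hZ_pos : 0 < μ.real Z := ((measureReal_ne_zero_iff).mpr hZ₀).lt_of_le' measureReal_nonneg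
  have ha : 0 < pathWeight Q k l a := hν.pathWeight_pos hQ h'.le fun hnull =>
    hZ₀ (measure_φZ ▸ measure_mono_null hZa.image_subset hnull)
  have hTZ_pos : 0 < μ.real TZ := by
    have : 0 < pathWeight P lo hi u * μ.real TZ := scaling ▸ mul_pos hv hZ_pos
    exact pos_of_mul_pos_right this (pathWeight_nonneg hP _ _ _)
  have hb : 0 < pathWeight Q k l' b :=
    pos_of_mul_pos_left (scaling' ▸ mul_pos ha hTZ_pos) hZ_pos.le
  refine ⟨ha, hb, ?_⟩
  rw [div_eq_div_iff hv.ne' hb.ne']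
  refine mul_right_cancel₀ hZ_pos.ne' ?_
  linear_combination pathWeight Q k l a * scaling - pathWeight P lo hi u * scaling'

theorem IsFactorMap.exists_parallelWords_pathWeight_ratio_eq [StandardBorelSpace S]
    [StandardBorelSpace B] [IsFiniteMeasure ν] (hφ : IsFactorMap μ ν D φ) (hinj : Set.InjOn φ D)
    (hlen : ∫⁻ x, codeLength D φ x ∂μ < ⊤) (hμ : IsMarkovMeasure μ P p) (hP : ∀ i j, 0 ≤ P i j)
    (hν : IsMarkovMeasure ν Q q) (hQ : ∀ i j, 0 ≤ Q i j) (h : ParallelWords lo hi hi' u v)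
    (hu : μ (wordCylinder lo hi u) ≠ 0) (hv : 0 < pathWeight P lo hi' v) :
    ∃ (N : ℕ) (a b : ℤ → B), ParallelWords (lo - N) (hi + N) (hi' + N) a b ∧
      0 < pathWeight Q (lo - N) (hi + N) a ∧ 0 < pathWeight Q (lo - N) (hi' + N) b ∧
      pathWeight P lo hi u / pathWeight P lo hi' v =
        pathWeight Q (lo - N) (hi + N) a / pathWeight Q (lo - N) (hi' + N) b := by
  obtain ⟨N, a, b, Z, hab, hZ, hZ₀, hZu, hZa, hZb⟩ :=
    hφ.exists_map_replaceWord hμ hP hlen h hu hv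
  exact ⟨N, a, b, hab, hφ.pathWeight_ratio_eq hinj hμ hP hν hQ h hab hv hZ hZ₀ hZu hZa hZb⟩

end Transport

section CycleGroup

variable {S : Type*} {P : Matrix S S ℝ} {s t r : S} {n m : ℕ} {w w' : ℝˣ}

/-- `w` is the strictly positive weight of a path of length `n` from `s` to `t`. Weights are units,
so that they can be multiplied and divided in the groups `Γ` and `Δ`. -/
def IsPathWeight (P : Matrix S S ℝ) (s t : S) (n : ℕ) (w : ℝˣ) : Prop :=
  0 < (w : ℝ) ∧ ∃ c : ℕ → S, c 0 = s ∧ c n = t ∧ cycleWeight P n c = w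

theorem isPathWeight_refl (P : Matrix S S ℝ) (s : S) : IsPathWeight P s s 0 1 :=
  ⟨one_pos, fun _ => s, rfl, rfl, by simp [cycleWeight]⟩

theorem isPathWeight_of_entry_pos (h : 0 < P s t) : IsPathWeight P s t 1 (Units.mk0 _ h.ne') :=
  ⟨h, fun i => if i = 0 then s else t, rfl, rfl, by simp [cycleWeight]⟩

theorem isPathWeight_of_pathWeight_pos {lo hi : ℤ} (h : lo ≤ hi) {c : ℤ → S}
    (hc : 0 < pathWeight P lo hi c) :
    IsPathWeight P (c lo) (c hi) (hi - lo).toNat (Units.mk0 _ hc.ne') := by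
  obtain ⟨n, rfl⟩ : ∃ n : ℕ, hi = lo + n := ⟨(hi - lo).toNat, by lia⟩
  rw [add_sub_cancel_left, Int.toNat_natCast]
  exact ⟨hc, fun i => c (lo + i), by simp, rfl, (pathWeight_eq_cycleWeight P lo n c).symm⟩

theorem IsPathWeight.trans (h : IsPathWeight P s t n w) (h' : IsPathWeight P t r m w') :
    IsPathWeight P s r (n + m) (w * w') := by
  obtain ⟨hw, c, rfl, rfl, hc⟩ := h
  obtain ⟨hw', d, hd₀, rfl, hd⟩ := h'
  let e : ℕ → S := fun i => if i ≤ n then c i else d (i - n)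
  have e_left : ∀ i ≤ n, e i = c i := fun i hi => if_pos hi
  have e_right (i : ℕ) : e (n + i) = d i := by
    cases i with
    | zero => exact (e_left n le_rfl).trans hd₀.symm
    | succ i => simp [e]
  refine ⟨mul_pos hw hw', e, e_left 0 n.zero_le, e_right m, ?_⟩
  rw [Units.val_mul, ← hc, ← hd, cycleWeight, Finset.prod_range_add]
  congr 1
  · refine Finset.prod_congr rfl fun i hi => ?_
    rw [Finset.mem_range] at hi
    rw [e_left i hi.le, e_left (i + 1) hi]
  · simp only [add_assoc, e_right, cycleWeight]

theorem reflTransGen_of_isIrreducible (hP : P.IsIrreducible) (s t : S) :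
    Relation.ReflTransGen (fun i j => 0 < P i j) s t := by
  let _ : Quiver S := P.toQuiver
  obtain ⟨path, -⟩ := hP.connected s t
  induction path with
  | nil => exact .refl
  | cons _ edge ih => exact ih.tail edge.down

theorem exists_isPathWeight (hP : P.IsIrreducible) (s t : S) :
    ∃ n w, IsPathWeight P s t n w := by
  induction reflTransGen_of_isIrreducible hP s t with
  | refl => exact ⟨0, 1, isPathWeight_refl P s⟩
  | tail _ hstep ih =>
    obtain ⟨n, w, hw⟩ := ih
    exact ⟨_, _, hw.trans (isPathWeight_of_entry_pos hstep)⟩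

theorem IsStationaryVector.pos [Fintype S] {p : S → ℝ} (hp : IsStationaryVector P p)
    (hP : P.IsIrreducible) (t : S) : 0 < p t := by
  obtain ⟨s, -, hs⟩ := Finset.exists_lt_of_sum_lt (s := Finset.univ) (f := fun _ : S => (0 : ℝ))
    (g := p) (by simp [hp.2.1])
  induction reflTransGen_of_isIrreducible hP s t with
  | refl => exact hs
  | tail _ hstep ih =>
    rw [← hp.2.2]
    exact Finset.sum_pos' (fun i _ => mul_nonneg (hp.1 i) (hP.nonneg _ _))
      ⟨_, Finset.mem_univ _, mul_pos ih hstep⟩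

/-- The group generated by the pairs (length, weight) of the cycles of positive weight. The group
`Γ` is its projection to the weights, `Δ` is its fibre over length `0`, and the distinguished
generator `cΔ` is its fibre over length `1`. -/
def cycleGroup (P : Matrix S S ℝ) : Subgroup (Multiplicative ℤ × ℝˣ) :=
  Subgroup.closure {g | ∃ s n w, IsPathWeight P s s n w ∧ g = (Multiplicative.ofAdd (n : ℤ), w)}

theorem IsPathWeight.mem_cycleGroup (h : IsPathWeight P s s n w) :
    (Multiplicative.ofAdd (n : ℤ), w) ∈ cycleGroup P :=
  Subgroup.subset_closure ⟨s, n, w, h, rfl⟩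

theorem IsCycle.mem_cycleGroup {c : ℕ → S} (hc : IsCycle n c) (hw : 0 < cycleWeight P n c) :
    (Multiplicative.ofAdd (n : ℤ), Units.mk0 _ hw.ne') ∈ cycleGroup P :=
  IsPathWeight.mem_cycleGroup ⟨hw, c, rfl, hc, rfl⟩

theorem mk_one_div_mem {G H : Type*} [Group G] [Group H] {K : Subgroup (G × H)} {g : G} {h h' : H}
    (hh : (g, h) ∈ K) (hh' : (g, h') ∈ K) : ((1 : G), h / h') ∈ K := by
  have := div_mem hh hh'
  rwa [Prod.mk_div_mk, div_self'] at this

/-- Closing both paths up by one and the same return path does not change the quotient. -/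
theorem IsPathWeight.div_mem_cycleGroup (hP : P.IsIrreducible) (h : IsPathWeight P s t n w)
    (h' : IsPathWeight P s t m w') :
    (Multiplicative.ofAdd ((n : ℤ) - m), w / w') ∈ cycleGroup P := by
  obtain ⟨k, r, hr⟩ := exists_isPathWeight hP t s
  have := div_mem (h.trans hr).mem_cycleGroup (h'.trans hr).mem_cycleGroup
  rwa [Prod.mk_div_mk, ← ofAdd_sub, mul_div_mul_right_eq_div, Nat.cast_add, Nat.cast_add,
    add_sub_add_right_eq_sub] at this

theorem ParallelWords.mem_cycleGroup (hP : P.IsIrreducible) {lo hi hi' : ℤ} {u v : ℤ → S}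
    (h : ParallelWords lo hi hi' u v) (hu : 0 < pathWeight P lo hi u)
    (hv : 0 < pathWeight P lo hi' v) :
    (Multiplicative.ofAdd (hi - hi'), Units.mk0 _ hu.ne' / Units.mk0 _ hv.ne') ∈ cycleGroup P := by
  have u_path := isPathWeight_of_pathWeight_pos h.le hu
  rw [h.left, h.right] at u_path
  have := u_path.div_mem_cycleGroup hP (isPathWeight_of_pathWeight_pos h.le' hv)
  rwa [Int.toNat_of_nonneg (sub_nonneg.mpr h.le), Int.toNat_of_nonneg (sub_nonneg.mpr h.le'),
    sub_sub_sub_cancel_right] at this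

theorem exists_isPathWeight_div_of_mem_cycleGroup (hP : P.IsIrreducible) (s : S)
    {g : Multiplicative ℤ × ℝˣ} (hg : g ∈ cycleGroup P) :
    ∃ n m w w', IsPathWeight P s s n w ∧ IsPathWeight P s s m w' ∧
      g = (Multiplicative.ofAdd ((n : ℤ) - m), w / w') := by
  induction hg using Subgroup.closure_induction with
  | mem g hg =>
    obtain ⟨t, n, w, hw, rfl⟩ := hg
    obtain ⟨k, a, ha⟩ := exists_isPathWeight hP s t
    obtain ⟨l, b, hb⟩ := exists_isPathWeight hP t s
    refine ⟨_, _, _, _, (ha.trans hw).trans hb, ha.trans hb, ?_⟩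
    congr 2
    · lia
    · rw [mul_div_mul_right_eq_div, mul_div_cancel_left]
  | one => exact ⟨0, 0, 1, 1, isPathWeight_refl P s, isPathWeight_refl P s, by simp; rfl⟩
  | mul g g' _ _ ih ih' =>
    obtain ⟨n, m, w, w', hw, hw', rfl⟩ := ih
    obtain ⟨k, l, a, a', ha, ha', rfl⟩ := ih'
    refine ⟨_, _, _, _, hw.trans ha, hw'.trans ha', ?_⟩
    rw [Prod.mk_mul_mk, ← ofAdd_add, div_mul_div_comm]
    congr 2
    lia
  | inv g _ ih =>
    obtain ⟨n, m, w, w', hw, hw', rfl⟩ := ih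
    exact ⟨m, n, w', w, hw', hw, by rw [Prod.inv_mk, ← ofAdd_neg, neg_sub, inv_div]⟩

theorem gammaGroup_eq_map_cycleGroup (P : Matrix S S ℝ) :
    GammaGroup P = (cycleGroup P).map (MonoidHom.snd _ _) := by
  refine le_antisymm ((Subgroup.closure_le _).mpr ?_) ?_
  · rintro x ⟨n, c, -, hc, hw, hx⟩
    exact ⟨_, hc.mem_cycleGroup hw, Units.ext hx.symm⟩
  · rw [cycleGroup, MonoidHom.map_closure, Subgroup.closure_le]
    rintro _ ⟨_, ⟨s, n, w, ⟨hw, c, rfl, hc, hcw⟩, rfl⟩, rfl⟩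
    obtain rfl | hn := n.eq_zero_or_pos
    · have : w = 1 := Units.ext (by simpa [cycleWeight] using hcw.symm)
      exact this ▸ one_mem _
    · exact Subgroup.subset_closure ⟨n, c, hn, hc, hcw ▸ hw, hcw.symm⟩

theorem IsPathWeight.div_mem_deltaGroup (h : IsPathWeight P s s n w)
    (h' : IsPathWeight P s s n w') : w / w' ∈ DeltaGroup P := by
  obtain ⟨hw, c, hc₀, hcn, hcw⟩ := h
  obtain ⟨hw', d, hd₀, hdn, hdw⟩ := h'
  obtain rfl | hn := n.eq_zero_or_pos
  · have : w = w' := Units.ext (hcw.symm.trans hdw)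
    rw [this, div_self']
    exact one_mem _
  · exact Subgroup.subset_closure ⟨n, c, d, hn, hcn.trans hc₀.symm, hdn.trans hd₀.symm,
      hc₀.trans hd₀.symm, hcw ▸ hw, hdw ▸ hw', by rw [Units.val_div_eq_div_val, hcw, hdw]⟩

theorem deltaGroup_eq_comap_cycleGroup [Nonempty S] (hP : P.IsIrreducible) :
    DeltaGroup P = (cycleGroup P).comap (MonoidHom.inr _ _) := by
  refine le_antisymm ((Subgroup.closure_le _).mpr ?_) fun x hx => ?_
  · rintro x ⟨n, c, d, -, hc, hd, -, hcw, hdw, hx⟩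
    rw [(Units.ext hx : x = Units.mk0 _ hcw.ne' / Units.mk0 _ hdw.ne')]
    exact mk_one_div_mem (hc.mem_cycleGroup hcw) (hd.mem_cycleGroup hdw)
  · obtain ⟨n, m, w, w', hw, hw', hx⟩ :=
      exists_isPathWeight_div_of_mem_cycleGroup hP (Classical.arbitrary S) hx
    rw [MonoidHom.inr_apply, Prod.mk.injEq, ← ofAdd_zero, EmbeddingLike.apply_eq_iff_eq] at hx
    obtain rfl : n = m := by lia
    exact hx.2 ▸ hw.div_mem_deltaGroup hw'

end CycleGroup

section FectCode

/-- One half of a finitary isomorphism with finite expected code times: an injective factor map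
whose code length has finite expectation. -/
def HasInjectiveFectCode {A B : Type*} [MeasurableSpace A] [MeasurableSpace B]
    (μ : Measure (ℤ → A)) (ν : Measure (ℤ → B)) : Prop :=
  ∃ (D : Set (ℤ → A)) (φ : (ℤ → A) → (ℤ → B)),
    IsFactorMap μ ν D φ ∧ Set.InjOn φ D ∧ ∫⁻ x, codeLength D φ x ∂μ < ⊤

theorem FinitarilyIsomorphicFect.hasInjectiveFectCode {A B : Type*} [MeasurableSpace A]
    [MeasurableSpace B] {μ : Measure (ℤ → A)} {ν : Measure (ℤ → B)}
    (h : FinitarilyIsomorphicFect μ ν) :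
    HasInjectiveFectCode μ ν ∧ HasInjectiveFectCode ν μ := by
  obtain ⟨D, E, φ, ψ, ⟨hφ, hψ, -, -, hDE, hED⟩, hlenφ, hlenψ⟩ := h
  have leftInv : Set.LeftInvOn ψ φ D := fun x hx => (hDE x hx).2
  have rightInv : Set.LeftInvOn φ ψ E := fun y hy => (hED y hy).2
  exact ⟨⟨D, φ, hφ, leftInv.injOn, hlenφ⟩, ⟨E, ψ, hψ, rightInv.injOn, hlenψ⟩⟩

/-- A cycle through `s` is parallel to the path of length `0` at `s`. -/
theorem HasInjectiveFectCode.cycleGroup_le {S₁ S₂ : Type*} [Fintype S₁] [Fintype S₂]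
    [MeasurableSpace S₁] [DiscreteMeasurableSpace S₁]
    [MeasurableSpace S₂] [DiscreteMeasurableSpace S₂]
    {P : Matrix S₁ S₁ ℝ} {p : S₁ → ℝ} {μ : Measure (ℤ → S₁)}
    {Q : Matrix S₂ S₂ ℝ} {q : S₂ → ℝ} {ν : Measure (ℤ → S₂)} (hcode : HasInjectiveFectCode μ ν)
    (hP : P.IsIrreducible) (hp : IsStationaryVector P p) (hμ : IsMarkovMeasure μ P p)
    (hQ : Q.IsIrreducible) (hq : IsStationaryVector Q q) (hν : IsMarkovMeasure ν Q q) :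
    cycleGroup P ≤ cycleGroup Q := by
  have := hμ.isProbabilityMeasure hp
  have := hν.isProbabilityMeasure hq
  obtain ⟨D, φ, hφ, hinj, hlen⟩ := hcode
  rw [cycleGroup, Subgroup.closure_le]
  rintro _ ⟨s, n, w, ⟨hw, c, hc₀, hcn, hcw⟩, rfl⟩
  let u (i : ℤ) : S₁ := c i.toNat
  have weight_u : pathWeight P 0 n u = w := by
    simpa [u, hcw] using pathWeight_eq_cycleWeight P 0 n u
  have weight_s : pathWeight P 0 0 (fun _ => s) = 1 := by simp [pathWeight]
  have hu : μ (wordCylinder 0 n u) ≠ 0 := by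
    rw [hμ.measure_wordCylinder n.cast_nonneg, weight_u]
    exact (ENNReal.ofReal_pos.mpr (mul_pos (hp.pos hP _) hw)).ne'
  obtain ⟨N, a, b, hab, ha, hb, ratio⟩ := hφ.exists_parallelWords_pathWeight_ratio_eq hinj hlen
    hμ hP.nonneg hν hQ.nonneg (v := fun _ => s)
    ⟨n.cast_nonneg, le_rfl, hc₀, by simpa [u] using hcn⟩ hu (weight_s ▸ one_pos)
  rw [weight_u, weight_s, div_one] at ratio
  have : w = Units.mk0 _ ha.ne' / Units.mk0 _ hb.ne' := Units.ext ratio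
  simpa [this] using hab.mem_cycleGroup hQ ha hb

theorem IsStationaryVector.nonempty {S : Type*} [Fintype S] {P : Matrix S S ℝ} {p : S → ℝ}
    (hp : IsStationaryVector P p) : Nonempty S := by
  by_contra hS
  rw [not_nonempty_iff] at hS
  simpa using hp.2.1

theorem IsPrimitive.isIrreducible {S : Type*} [Fintype S] [DecidableEq S] {P : Matrix S S ℝ}
    (hP : IsPrimitive P) (hstoch : IsStochastic P) : P.IsIrreducible := by
  obtain ⟨n, hn⟩ := hP
  refine Matrix.IsPrimitive.isIrreducible ⟨hstoch.1, n + 1, n.succ_pos, fun i j => ?_⟩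
  obtain ⟨k, -, hk⟩ := Finset.exists_lt_of_sum_lt (s := Finset.univ) (f := fun _ : S => (0 : ℝ))
    (g := P i) (by simp [hstoch.2 i])
  rw [pow_succ', Matrix.mul_apply]
  exact Finset.sum_pos' (fun l _ => mul_nonneg (hstoch.1 i l) (hn l j).le)
    ⟨k, Finset.mem_univ k, mul_pos hk (hn k j)⟩

theorem gamma_delta_generator_invariants_of_fect_general {S₁ S₂ : Type*} [Fintype S₁] [Fintype S₂]
    [MeasurableSpace S₁] [DiscreteMeasurableSpace S₁]
    [MeasurableSpace S₂] [DiscreteMeasurableSpace S₂]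
    {P : Matrix S₁ S₁ ℝ} {p : S₁ → ℝ} {μ : Measure (ℤ → S₁)}
    {Q : Matrix S₂ S₂ ℝ} {q : S₂ → ℝ} {ν : Measure (ℤ → S₂)}
    (hP : P.IsIrreducible) (hp : IsStationaryVector P p) (hμ : IsMarkovMeasure μ P p)
    (hQ : Q.IsIrreducible) (hq : IsStationaryVector Q q) (hν : IsMarkovMeasure ν Q q)
    (hPQ : HasInjectiveFectCode μ ν) (hQP : HasInjectiveFectCode ν μ) :
    GammaGroup P = GammaGroup Q ∧ DeltaGroup P = DeltaGroup Q ∧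
      ∀ (n : ℕ) (c : ℕ → S₁) (d : ℕ → S₂), IsCycle n c → IsCycle n d →
        0 < cycleWeight P n c → 0 < cycleWeight Q n d →
        ∃ u ∈ DeltaGroup P, (u : ℝ) = cycleWeight P n c / cycleWeight Q n d := by
  have := hp.nonempty
  have := hq.nonempty
  have cycleGroup_eq : cycleGroup P = cycleGroup Q :=
    (hPQ.cycleGroup_le hP hp hμ hQ hq hν).antisymm (hQP.cycleGroup_le hQ hq hν hP hp hμ)
  rw [gammaGroup_eq_map_cycleGroup P, gammaGroup_eq_map_cycleGroup Q,
    deltaGroup_eq_comap_cycleGroup hP, deltaGroup_eq_comap_cycleGroup hQ, cycleGroup_eq]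
  refine ⟨rfl, rfl, fun n c d hc hd hcw hdw =>
    ⟨Units.mk0 _ hcw.ne' / Units.mk0 _ hdw.ne', ?_, by simp⟩⟩
  exact mk_one_div_mem (cycleGroup_eq ▸ hc.mem_cycleGroup hcw) (hd.mem_cycleGroup hdw)

end FectCode

/-- **Parry–Schmidt.** If the mixing Markov shifts of `P` and `Q` are finitarily
isomorphic with finite expected code times, then `Γ_P = Γ_Q`, `Δ_P = Δ_Q`, and the
distinguished generators agree: for every `n ≥ 1`, the ratio of any strictly positive
weight of a cycle of length `n` in `P` to any strictly positive weight of a cycle of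
length `n` in `Q` belongs to `Δ_P`. -/
theorem gamma_delta_generator_invariants_of_fect
    {S₁ S₂ : Type*} [Fintype S₁] [DecidableEq S₁] [Fintype S₂] [DecidableEq S₂]
    [MeasurableSpace S₁] [DiscreteMeasurableSpace S₁]
    [MeasurableSpace S₂] [DiscreteMeasurableSpace S₂]
    (P : Matrix S₁ S₁ ℝ) (hPstoch : IsStochastic P) (hPprim : IsPrimitive P)
    (ppi₁ : S₁ → ℝ) (hppi₁ : IsStationaryVector P ppi₁)
    (μ : Measure (ℤ → S₁)) (hμ : IsMarkovMeasure μ P ppi₁)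
    (Q : Matrix S₂ S₂ ℝ) (hQstoch : IsStochastic Q) (hQprim : IsPrimitive Q)
    (ppi₂ : S₂ → ℝ) (hppi₂ : IsStationaryVector Q ppi₂)
    (ν : Measure (ℤ → S₂)) (hν : IsMarkovMeasure ν Q ppi₂)
    (hfect : FinitarilyIsomorphicFect μ ν) :
    GammaGroup (S := S₁) P = GammaGroup (S := S₂) Q ∧
    DeltaGroup (S := S₁) P = DeltaGroup (S := S₂) Q ∧
    ∀ (n : ℕ), 0 < n → ∀ (c : ℕ → S₁) (d : ℕ → S₂),
      IsCycle n c → IsCycle n d →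
      0 < cycleWeight P n c → 0 < cycleWeight Q n d →
      ∃ u ∈ DeltaGroup (S := S₁) P,
        (u : ℝ) = cycleWeight P n c / cycleWeight Q n d := by
  obtain ⟨hPQ, hQP⟩ := hfect.hasInjectiveFectCode
  obtain ⟨hΓ, hΔ, ratio_mem⟩ := gamma_delta_generator_invariants_of_fect_general
    (hPprim.isIrreducible hPstoch) hppi₁ hμ (hQprim.isIrreducible hQstoch) hppi₂ hν hPQ hQP
  exact ⟨hΓ, hΔ, fun n _ => ratio_mem n⟩
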